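/- If α, α', β, β' are n-dimensional finite signed vector measures with LH(α) = LH(α') and LH(β) = LH(β'), then LH(α × β) = LH(α' × β'). Hence the Lorenz product of Lorenz hulls, H₁H₂ := LH(α × β) for any α, β with LH(α) = H₁, LH(β) = H₂, is well-defined. -/

import Mathlib

open MeasureTheory

/-- The Lorenz hull of an `n`-dimensional finite signed vector measure:
the convex hull of its range in `ℝⁿ`. -/
def lorenzHull {n : ℕ} {S : Type*} [MeasurableSpace S]
    (α : Fin n → MeasureTheory.SignedMeasure S) : Set (Fin n → ℝ) :=
  convexHull ℝ {x | ∃ A : Set S, MeasurableSet A ∧ x = fun i => α i A}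

section

open Set Filter Topology

/-- In finite dimension, a point outside a convex set containing the origin is weakly separated
from it, without any topological assumption on the set. -/
lemma exists_ne_zero_forall_le_of_notMem {V : Type*} [NormedAddCommGroup V] [NormedSpace ℝ V]
    [FiniteDimensional ℝ V] {C : Set V} (hC : Convex ℝ C) (h0 : (0 : V) ∈ C) {z : V}
    (hz : z ∉ C) : ∃ c : StrongDual ℝ V, c ≠ 0 ∧ ∀ y ∈ C, c y ≤ c z := by
  by_cases hint : (interior C).Nonempty
  · exact geometric_hahn_banach_of_nonempty_interior_point hC
      (fun h => hz (interior_subset h)) hint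
  · have hspan : Submodule.span ℝ C < ⊤ := by
      refine lt_top_iff_ne_top.2 fun h => hint ?_
      rw [← hC.convexHull_eq, interior_convexHull_nonempty_iff_affineSpan_eq_top,
        ← insert_eq_of_mem h0, ← AffineSubspace.coe_eq_univ_iff, affineSpan_insert_zero, h]
      rfl
    obtain ⟨f, hf0, hf⟩ := Submodule.exists_le_ker_of_lt_top _ hspan
    have hfC : ∀ y ∈ C, f y = 0 := fun y hy => hf (Submodule.subset_span hy)
    have hne : f.toContinuousLinearMap ≠ 0 := by simpa using hf0
    obtain h | h := le_total 0 (f z)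
    · exact ⟨f.toContinuousLinearMap, hne, fun y hy => by simpa [hfC y hy] using h⟩
    · exact ⟨-f.toContinuousLinearMap, neg_ne_zero.2 hne,
        fun y hy => by simpa [hfC y hy] using h⟩

variable {X : Type*} [MeasurableSpace X] {μ : Measure X}

/-- Directional derivative of `u ↦ ∫ u⁺` at a function where a linear bound is attained. -/
lemma le_setIntegral_add_of_forall_le_integral_max {u v : X → ℝ} (hum : Measurable u)
    (hu : Integrable u μ) (hv : Integrable v μ) {a b : ℝ}
    (ha : a = ∫ s, max (u s) 0 ∂μ)
    (hab : ∀ ε : ℝ, 0 < ε → a + ε * b ≤ ∫ s, max (u s + ε * v s) 0 ∂μ) :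
    b ≤ ∫ s in {s | 0 < u s}, v s ∂μ + ∫ s in {s | u s = 0}, max (v s) 0 ∂μ := by
  have hP : MeasurableSet {s | 0 < u s} := measurableSet_lt measurable_const hum
  have hZ : MeasurableSet {s | u s = 0} := measurableSet_eq_fun hum measurable_const
  rw [← integral_indicator hP, ← integral_indicator hZ,
    ← integral_add (hv.indicator hP) (hv.pos_part.indicator hZ)]
  have key : Tendsto (fun ε : ℝ => ∫ s, (max (u s + ε * v s) 0 - max (u s) 0) / ε ∂μ) (𝓝[>] 0)
      (𝓝 (∫ s, ({s | 0 < u s}.indicator v s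
        + {s | u s = 0}.indicator (fun s => max (v s) 0) s) ∂μ)) := by
    refine tendsto_integral_filter_of_dominated_convergence (fun s => |v s|) ?_ ?_ hv.abs ?_
    · refine Eventually.of_forall fun ε => ?_
      exact (((hu.add (hv.const_mul ε)).pos_part.sub hu.pos_part).div_const ε).aestronglyMeasurable
    · filter_upwards [self_mem_nhdsWithin] with ε hε
      refine Eventually.of_forall fun s => ?_
      have hε : 0 < ε := hε
      rw [Real.norm_eq_abs, abs_div, abs_of_pos hε, div_le_iff₀ hε]
      calc _ ≤ |u s + ε * v s - u s| := abs_max_sub_max_le_abs _ _ _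
        _ = |v s| * ε := by rw [add_sub_cancel_left, abs_mul, abs_of_pos hε, mul_comm]
    · refine Eventually.of_forall fun s => ?_
      have hlim : Tendsto (fun ε : ℝ => u s + ε * v s) (𝓝[>] 0) (𝓝 (u s)) := by
        have : Tendsto (fun ε : ℝ => u s + ε * v s) (𝓝 0) (𝓝 (u s + 0 * v s)) := by
          exact Continuous.tendsto (by fun_prop) 0
        simpa using this.mono_left nhdsWithin_le_nhds
      refine tendsto_const_nhds.congr' ?_
      obtain h | h | h := lt_trichotomy (u s) 0
      · filter_upwards [self_mem_nhdsWithin, hlim.eventually_lt_const h] with ε hε h'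
        simp [h.not_gt, h.ne, max_eq_right h.le, max_eq_right h'.le]
      · filter_upwards [self_mem_nhdsWithin] with ε hε
        have hε : 0 < ε := hε
        have : max (ε * v s) 0 = ε * max (v s) 0 := by
          rw [mul_max_of_nonneg _ _ hε.le, mul_zero]
        simp [h, this, hε.ne']
      · filter_upwards [self_mem_nhdsWithin, hlim.eventually_const_lt h] with ε hε h'
        have hε : 0 < ε := hε
        simp [h, h.ne', max_eq_left h.le, max_eq_left h'.le, hε.ne']
  refine ge_of_tendsto key ?_
  filter_upwards [self_mem_nhdsWithin] with ε hε
  have hε : 0 < ε := hε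
  have h1 := hab ε hε
  have h2 : ∫ s, (max (u s + ε * v s) 0 - max (u s) 0) ∂μ
      = ∫ s, max (u s + ε * v s) 0 ∂μ - ∫ s, max (u s) 0 ∂μ :=
    integral_sub (hu.add (hv.const_mul ε)).pos_part hu.pos_part
  rw [integral_div, le_div_iff₀ hε, h2, ← ha]
  linarith

/-- The integral of the positive part of a linear functional is attained on a set. -/
lemma apply_setIntegral_pos_eq {V : Type*} [NormedAddCommGroup V] [NormedSpace ℝ V]
    [CompleteSpace V] {g : X → V} (hgm : StronglyMeasurable g)
    (hg : Integrable g μ) (c : StrongDual ℝ V) :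
    c (∫ s in {s | 0 < c (g s)}, g s ∂μ) = ∫ s, max (c (g s)) 0 ∂μ := by
  have hcm : Measurable fun s => c (g s) := (c.continuous.comp_stronglyMeasurable hgm).measurable
  rw [← c.integral_comp_comm hg.integrableOn,
    ← integral_indicator (measurableSet_lt measurable_const hcm)]
  congr 1 with s
  by_cases h : 0 < c (g s)
  · simp [h, h.le]
  · simp [h, not_lt.1 h]

lemma apply_le_integral_max_of_mem_convexHull {V : Type*} [NormedAddCommGroup V] [NormedSpace ℝ V]
    [CompleteSpace V] {g : X → V} (hg : Integrable g μ) {z : V}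
    (hz : z ∈ convexHull ℝ {x | ∃ A, MeasurableSet A ∧ x = ∫ s in A, g s ∂μ})
    (c : StrongDual ℝ V) : c z ≤ ∫ s, max (c (g s)) 0 ∂μ := by
  have hconv : Convex ℝ {z : V | c z ≤ ∫ s, max (c (g s)) 0 ∂μ} :=
    convex_halfSpace_le c.toLinearMap.isLinear _
  refine convexHull_min ?_ hconv hz
  rintro x ⟨A, hA, rfl⟩
  have hc := c.integrable_comp hg
  show c (∫ s in A, g s ∂μ) ≤ _
  rw [← c.integral_comp_comm hg.integrableOn]
  calc ∫ s in A, c (g s) ∂μ ≤ ∫ s in A, max (c (g s)) 0 ∂μ :=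
        integral_mono hc.integrableOn hc.pos_part.integrableOn fun s => le_max_left _ _
    _ ≤ _ := setIntegral_le_integral hc.pos_part (Eventually.of_forall fun s => le_max_right _ _)

/-- In finite dimension, a point satisfying all the inequalities given by the support function of the
convex hull of the range of a vector measure belongs to this hull, which is thus closed. -/
lemma mem_convexHull_of_forall_apply_le {d : ℕ} {V : Type*} [NormedAddCommGroup V]
    [NormedSpace ℝ V] [FiniteDimensional ℝ V] (hd : Module.finrank ℝ V < d)
    {μ : Measure X} {g : X → V} (hgm : StronglyMeasurable g) (hg : Integrable g μ) {z : V}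
    (hz : ∀ c : StrongDual ℝ V, c z ≤ ∫ s, max (c (g s)) 0 ∂μ) :
    z ∈ convexHull ℝ {x | ∃ A, MeasurableSet A ∧ x = ∫ s in A, g s ∂μ} := by
  have := FiniteDimensional.complete ℝ V
  induction d generalizing V μ with
  | zero => omega
  | succ d ih =>
    by_contra hzC
    obtain ⟨c, hc0, hc⟩ := exists_ne_zero_forall_le_of_notMem (convex_convexHull ℝ _)
      (subset_convexHull ℝ {x | ∃ A, MeasurableSet A ∧ x = ∫ s in A, g s ∂μ}
        ⟨∅, .empty, by simp⟩) hzC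
    have hcm : Measurable fun s => c (g s) :=
      (c.continuous.comp_stronglyMeasurable hgm).measurable
    set P : Set X := {s | 0 < c (g s)}
    set Z : Set X := {s | c (g s) = 0}
    have hP : MeasurableSet P := measurableSet_lt measurable_const hcm
    have hZ : MeasurableSet Z := measurableSet_eq_fun hcm measurable_const
    have hcz : c z = ∫ s, max (c (g s)) 0 ∂μ := by
      refine le_antisymm (hz c) ?_
      rw [← apply_setIntegral_pos_eq hgm hg c]
      exact hc _ (subset_convexHull ℝ _ ⟨P, hP, rfl⟩)
    set W : Submodule ℝ V := LinearMap.ker c.toLinearMap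
    obtain ⟨p₀, hp₀⟩ := LinearMap.exists_leftInverse_of_injective W.subtype W.ker_subtype
    set p : V →L[ℝ] W := p₀.toContinuousLinearMap
    have hp : ∀ w : V, w ∈ W → (p w : V) = w := fun w hw =>
      congrArg Subtype.val (LinearMap.congr_fun hp₀ ⟨w, hw⟩)
    have hmemW : ∀ w : V, w ∈ W ↔ c w = 0 := fun w => LinearMap.mem_ker
    set z₁ : V := z - ∫ s in P, g s ∂μ with hz₁
    have hz₁W : z₁ ∈ W := by
      rw [hmemW, hz₁, map_sub, hcz, ← apply_setIntegral_pos_eq hgm hg c, sub_self]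
    have hrank : Module.finrank ℝ W < d := by
      have : W ≠ ⊤ := by
        refine fun h => hc0 ?_
        ext v
        exact (hmemW v).1 (h ▸ Submodule.mem_top)
      have := Submodule.finrank_lt this
      omega
    have hsub : p z₁ ∈ convexHull ℝ
        {x : W | ∃ A, MeasurableSet A ∧ x = ∫ s in A, p (g s) ∂(μ.restrict Z)} := by
      refine ih hrank (p.continuous.comp_stronglyMeasurable hgm)
        (p.integrable_comp hg.integrableOn) (fun e => ?_) inferInstance
      have key := le_setIntegral_add_of_forall_le_integral_max hcm (c.integrable_comp hg)
        ((e.comp p).integrable_comp hg) (b := e (p z)) hcz fun ε hε => by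
          simpa using hz (c + ε • e.comp p)
      have hPint : ∫ s in P, e.comp p (g s) ∂μ = e (p (∫ s in P, g s ∂μ)) :=
        (e.comp p).integral_comp_comm hg.integrableOn
      rw [hPint] at key
      rw [hz₁, map_sub, map_sub]
      exact sub_le_iff_le_add'.2 key
    refine hzC ?_
    set φ : W →ᵃ[ℝ] V := W.subtype.toAffineMap + AffineMap.const ℝ W (∫ s in P, g s ∂μ) with hφ
    have hφz : φ (p z₁) = z := by
      have : φ (p z₁) = p z₁ + ∫ s in P, g s ∂μ := rfl
      rw [this, hp z₁ hz₁W, hz₁, sub_add_cancel]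
    rw [← hφz]
    have himg := mem_image_of_mem φ hsub
    rw [φ.image_convexHull] at himg
    refine convexHull_mono ?_ himg
    rintro _ ⟨_, ⟨A, hA, rfl⟩, rfl⟩
    have hdisj : Disjoint (A ∩ Z) P := by
      refine Set.disjoint_left.2 fun s hs hs' => ?_
      exact (ne_of_gt hs') hs.2
    refine ⟨(A ∩ Z) ∪ P, (hA.inter hZ).union hP, ?_⟩
    rw [setIntegral_union hdisj hP hg.integrableOn hg.integrableOn, Measure.restrict_restrict hA]
    have : ((∫ s in A ∩ Z, p (g s) ∂μ : W) : V) = ∫ s in A ∩ Z, g s ∂μ := by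
      rw [← W.subtypeL_apply, ← W.subtypeL.integral_comp_comm (p.integrable_comp hg.integrableOn)]
      refine setIntegral_congr_fun (hA.inter hZ) fun s hs => ?_
      exact hp _ ((hmemW _).2 hs.2)
    simp [hφ, this]

/-- Two signed measures on a product space agreeing on measurable rectangles are equal. -/
lemma signedMeasure_prod_ext {S T : Type*} [MeasurableSpace S] [MeasurableSpace T]
    {σ τ : SignedMeasure (S × T)}
    (h : ∀ A B, MeasurableSet A → MeasurableSet B → σ (A ×ˢ B) = τ (A ×ˢ B)) : σ = τ := by
  ext C hC
  induction C, hC using MeasurableSpace.induction_on_inter generateFrom_prod.symm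
    isPiSystem_prod with
  | empty => simp
  | basic t ht =>
    obtain ⟨A, hA, B, hB, rfl⟩ := ht
    exact h A B hA hB
  | compl t ht ih =>
    have huniv : σ univ = τ univ := by
      simpa using h univ univ .univ .univ
    rw [VectorMeasure.of_compl ht, VectorMeasure.of_compl ht, ih, huniv]
  | iUnion f hd hf ih =>
    rw [VectorMeasure.of_disjoint_iUnion hf hd, VectorMeasure.of_disjoint_iUnion hf hd]
    simp_rw [ih]

/-- A finite signed vector measure has a density with respect to a finite positive measure. -/
lemma exists_density {n : ℕ} {S : Type*} [MeasurableSpace S] (α : Fin n → SignedMeasure S) :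
    ∃ (μ : Measure S) (a : S → Fin n → ℝ), IsFiniteMeasure μ ∧ StronglyMeasurable a ∧
      Integrable a μ ∧ ∀ i A, MeasurableSet A → α i A = ∫ s in A, a s i ∂μ := by
  have hle : ∀ i, (α i).totalVariation ≤ ∑ j, (α j).totalVariation := fun i =>
    Finset.single_le_sum (f := fun j => (α j).totalVariation) (fun _ _ => Measure.zero_le _)
      (Finset.mem_univ i)
  have hfin : ∀ i, IsFiniteMeasure (α i).totalVariation := fun i => by
    unfold SignedMeasure.totalVariation; infer_instance
  have hfin' : IsFiniteMeasure (∑ j, (α j).totalVariation) := inferInstance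
  refine ⟨∑ j, (α j).totalVariation, fun s i => (α i).rnDeriv (∑ j, (α j).totalVariation) s,
    hfin', ?_, ?_, fun i A hA => ?_⟩
  · exact (measurable_pi_lambda _ fun i => SignedMeasure.measurable_rnDeriv _ _).stronglyMeasurable
  · exact Integrable.of_eval fun i => SignedMeasure.integrable_rnDeriv _ _
  · have hac : α i ≪ᵥ (∑ j, (α j).totalVariation).toENNRealVectorMeasure := by
      refine VectorMeasure.AbsolutelyContinuous.mk fun B hB h0 => ?_
      rw [Measure.toENNRealVectorMeasure_apply_measurable hB] at h0
      exact SignedMeasure.null_of_totalVariation_zero _ (le_antisymm (h0 ▸ hle i B) zero_le)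
    rw [← withDensityᵥ_apply (SignedMeasure.integrable_rnDeriv _ _) hA,
      (SignedMeasure.absolutelyContinuous_iff_withDensityᵥ_rnDeriv_eq _ _).1 hac]

lemma mem_lorenzHull_iff {n : ℕ} {S : Type*} [MeasurableSpace S] {α : Fin n → SignedMeasure S}
    {μ : Measure S} {a : S → Fin n → ℝ} (ham : StronglyMeasurable a) (ha : Integrable a μ)
    (h : ∀ i A, MeasurableSet A → α i A = ∫ s in A, a s i ∂μ) {z : Fin n → ℝ} :
    z ∈ lorenzHull α ↔ ∀ c : StrongDual ℝ (Fin n → ℝ), c z ≤ ∫ s, max (c (a s)) 0 ∂μ := by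
  have hset : lorenzHull α = convexHull ℝ {x | ∃ A, MeasurableSet A ∧ x = ∫ s in A, a s ∂μ} := by
    unfold lorenzHull
    congr 1 with x
    refine exists_congr fun A => and_congr_right fun hA => ?_
    have : (fun i => α i A) = ∫ s in A, a s ∂μ := by
      ext i
      rw [eval_integral fun j => (ha.eval j).integrableOn, h i A hA]
    rw [this]
  rw [hset]
  exact ⟨apply_le_integral_max_of_mem_convexHull ha,
    mem_convexHull_of_forall_apply_le (Nat.lt_succ_self _) ham ha⟩

/-- The support function of a Lorenz hull is the integral of the positive part of the density. -/
lemma integral_max_le_of_lorenzHull_subset {n : ℕ} {S S' : Type*} [MeasurableSpace S]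
    [MeasurableSpace S'] {α : Fin n → SignedMeasure S} {α' : Fin n → SignedMeasure S'}
    {μ : Measure S} {μ' : Measure S'} {a : S → Fin n → ℝ} {a' : S' → Fin n → ℝ}
    (ham : StronglyMeasurable a) (ha : Integrable a μ)
    (h : ∀ i A, MeasurableSet A → α i A = ∫ s in A, a s i ∂μ)
    (ham' : StronglyMeasurable a') (ha' : Integrable a' μ')
    (h' : ∀ i A, MeasurableSet A → α' i A = ∫ s in A, a' s i ∂μ')
    (hsub : lorenzHull α ⊆ lorenzHull α') (c : StrongDual ℝ (Fin n → ℝ)) :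
    ∫ s, max (c (a s)) 0 ∂μ ≤ ∫ s, max (c (a' s)) 0 ∂μ' := by
  have hcm : Measurable fun s => c (a s) := (c.continuous.comp_stronglyMeasurable ham).measurable
  have hP : MeasurableSet {s | 0 < c (a s)} := measurableSet_lt measurable_const hcm
  have hmem : ∫ s in {s | 0 < c (a s)}, a s ∂μ ∈ lorenzHull α := by
    refine subset_convexHull ℝ _ ⟨_, hP, ?_⟩
    ext i
    rw [eval_integral fun j => (ha.eval j).integrableOn, h i _ hP]
  rw [← apply_setIntegral_pos_eq ham ha c]
  exact (mem_lorenzHull_iff ham' ha' h').1 (hsub hmem) c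

lemma integral_max_prod_eq {n : ℕ} {S S' T T' : Type*} [MeasurableSpace S] [MeasurableSpace S']
    [MeasurableSpace T] [MeasurableSpace T'] {μ : Measure S} {μ' : Measure S'} {ν : Measure T}
    {ν' : Measure T'} [SFinite μ] [SFinite μ'] [SFinite ν] [SFinite ν']
    {a : S → Fin n → ℝ} {a' : S' → Fin n → ℝ} {b : T → Fin n → ℝ} {b' : T' → Fin n → ℝ}
    (ha : Integrable a μ) (ha' : Integrable a' μ') (hb : Integrable b ν) (hb' : Integrable b' ν')
    (hα : ∀ c : StrongDual ℝ (Fin n → ℝ),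
      ∫ s, max (c (a s)) 0 ∂μ = ∫ s, max (c (a' s)) 0 ∂μ')
    (hβ : ∀ c : StrongDual ℝ (Fin n → ℝ),
      ∫ t, max (c (b t)) 0 ∂ν = ∫ t, max (c (b' t)) 0 ∂ν')
    (c : StrongDual ℝ (Fin n → ℝ)) :
    ∫ p, max (c (a p.1 * b p.2)) 0 ∂μ.prod ν = ∫ p, max (c (a' p.1 * b' p.2)) 0 ∂μ'.prod ν' := by
  let M := ContinuousLinearMap.mul ℝ (Fin n → ℝ)
  calc ∫ p, max (c (a p.1 * b p.2)) 0 ∂μ.prod ν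
      = ∫ t, ∫ s, max (c (a s * b t)) 0 ∂μ ∂ν :=
        integral_prod_symm _ (c.integrable_comp (ha.mul_prod hb)).pos_part
    _ = ∫ t, ∫ s, max (c (a' s * b t)) 0 ∂μ' ∂ν :=
        integral_congr_ae (Eventually.of_forall fun t => hα (c.comp (M.flip (b t))))
    _ = ∫ p, max (c (a' p.1 * b p.2)) 0 ∂μ'.prod ν :=
        (integral_prod_symm _ (c.integrable_comp (ha'.mul_prod hb)).pos_part).symm
    _ = ∫ s, ∫ t, max (c (a' s * b t)) 0 ∂ν ∂μ' :=
        integral_prod _ (c.integrable_comp (ha'.mul_prod hb)).pos_part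
    _ = ∫ s, ∫ t, max (c (a' s * b' t)) 0 ∂ν' ∂μ' :=
        integral_congr_ae (Eventually.of_forall fun s => hβ (c.comp (M (a' s))))
    _ = ∫ p, max (c (a' p.1 * b' p.2)) 0 ∂μ'.prod ν' :=
        (integral_prod _ (c.integrable_comp (ha'.mul_prod hb')).pos_part).symm

/-- The product of two vector measures has the product of their densities as density. -/
lemma mem_lorenzHull_prod_iff {n : ℕ} {S T : Type*} [MeasurableSpace S] [MeasurableSpace T]
    {α : Fin n → SignedMeasure S} {β : Fin n → SignedMeasure T}
    {ω : Fin n → SignedMeasure (S × T)}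
    (hω : ∀ i A B, MeasurableSet A → MeasurableSet B → ω i (A ×ˢ B) = α i A * β i B)
    {μ : Measure S} {ν : Measure T} [SFinite μ] [SFinite ν]
    {a : S → Fin n → ℝ} {b : T → Fin n → ℝ}
    (ham : StronglyMeasurable a) (ha : Integrable a μ)
    (hα : ∀ i A, MeasurableSet A → α i A = ∫ s in A, a s i ∂μ)
    (hbm : StronglyMeasurable b) (hb : Integrable b ν)
    (hβ : ∀ i B, MeasurableSet B → β i B = ∫ t in B, b t i ∂ν) {z : Fin n → ℝ} :
    z ∈ lorenzHull ω ↔ ∀ c : StrongDual ℝ (Fin n → ℝ),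
      c z ≤ ∫ p, max (c (a p.1 * b p.2)) 0 ∂μ.prod ν := by
  refine mem_lorenzHull_iff
    ((ham.comp_measurable measurable_fst).mul (hbm.comp_measurable measurable_snd))
    (ha.mul_prod hb) fun i C hC => ?_
  have hint : Integrable (fun p : S × T => a p.1 i * b p.2 i) (μ.prod ν) :=
    (ha.eval i).mul_prod (hb.eval i)
  have hdens : ω i = (μ.prod ν).withDensityᵥ fun p => a p.1 i * b p.2 i := by
    refine signedMeasure_prod_ext fun A B hA hB => ?_
    rw [withDensityᵥ_apply hint (hA.prod hB), hω i A B hA hB, hα i A hA, hβ i B hB]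
    exact (setIntegral_prod_mul (fun s => a s i) (fun t => b t i) A B).symm
  rw [hdens, withDensityᵥ_apply hint hC]
  rfl

end

theorem lorenzHull_product_well_defined
    {n : ℕ} {S S' T T' : Type*}
    [MeasurableSpace S] [MeasurableSpace S'] [MeasurableSpace T] [MeasurableSpace T']
    (α : Fin n → SignedMeasure S) (α' : Fin n → SignedMeasure S')
    (β : Fin n → SignedMeasure T) (β' : Fin n → SignedMeasure T')
    (ω : Fin n → SignedMeasure (S × T))
    (hω : ∀ i A B, MeasurableSet A → MeasurableSet B →
      ω i (A ×ˢ B) = α i A * β i B)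
    (ω' : Fin n → SignedMeasure (S' × T'))
    (hω' : ∀ i A B, MeasurableSet A → MeasurableSet B →
      ω' i (A ×ˢ B) = α' i A * β' i B)
    (hα : lorenzHull α = lorenzHull α') (hβ : lorenzHull β = lorenzHull β') :
    lorenzHull ω = lorenzHull ω' := by
  obtain ⟨μ, a, _, ham, ha, hαa⟩ := exists_density α
  obtain ⟨μ', a', _, ham', ha', hαa'⟩ := exists_density α'
  obtain ⟨ν, b, _, hbm, hb, hβb⟩ := exists_density β
  obtain ⟨ν', b', _, hbm', hb', hβb'⟩ := exists_density β'
  have hA : ∀ c : StrongDual ℝ (Fin n → ℝ),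
      ∫ s, max (c (a s)) 0 ∂μ = ∫ s, max (c (a' s)) 0 ∂μ' := fun c =>
    le_antisymm (integral_max_le_of_lorenzHull_subset ham ha hαa ham' ha' hαa' hα.le c)
      (integral_max_le_of_lorenzHull_subset ham' ha' hαa' ham ha hαa hα.ge c)
  have hB : ∀ c : StrongDual ℝ (Fin n → ℝ),
      ∫ t, max (c (b t)) 0 ∂ν = ∫ t, max (c (b' t)) 0 ∂ν' := fun c =>
    le_antisymm (integral_max_le_of_lorenzHull_subset hbm hb hβb hbm' hb' hβb' hβ.le c)
      (integral_max_le_of_lorenzHull_subset hbm' hb' hβb' hbm hb hβb hβ.ge c)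
  ext z
  rw [mem_lorenzHull_prod_iff hω ham ha hαa hbm hb hβb,
    mem_lorenzHull_prod_iff hω' ham' ha' hαa' hbm' hb' hβb']
  simp_rw [integral_max_prod_eq ha ha' hb hb' hA hB]
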